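/- arXiv:2511.20338 — 6 statements merged into one kernel-verified Lean document; each statement's English description precedes it below -/
import Mathlib

section
/- Let H = (V,E) be a graph with n vertices v_1,…,v_n, each of degree d_i ≥ 1, and m edges, and let 𝒢 = (G_1, G_2) be the temporal graph of lifetime 2 constructed from H via vertex gadgets and edge gadgets. Then for every natural number k: 𝒢 admits a temporal sequence 2-colouring of cost at most k if and only if there exists a partition of V into two colour classes such that at most k edges of E are monochromatic (have both endpoints in the same class). -/
/-!
In a proper 2-colouring of a gadget path all the `a`-vertices receive the same colour, so a
2-colouring of the first snapshot induces a colouring `c` of the vertices of `H`, and every `c`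
arises in this way. Each edge of the matching `G₂` joins two `a`-vertices, one for each endpoint of
the corresponding edge of `H`. If that edge is monochromatic under `c`, at least one of the two must
change colour between the snapshots; conversely, changing exactly one of them (the one of larger
index) for every monochromatic edge suffices.

Both counts use the map `gadgetEdge` sending a gadget vertex to an edge of `H`, with `a_i^p` sent to
the `p`-th edge of `i`: every monochromatic edge is the image of some recoloured vertex, and for the
recolouring above the map is injective on recoloured vertices.
-/

open Finset

/-- The gadget vertex set: for each vertex `i` of `H` (of degree `d_i = H.degree i ≥ 1`),
a set of `2 * d_i - 1` vertices.  The vertex at even position `2 * (p - 1)` plays the role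
of `a_i^p` (for `p ∈ [d_i]`), and the vertex at odd position `2 * j - 1` plays the role of
`b_i^j` (for `j ∈ [d_i - 1]`). -/
abbrev GadgetV {n : ℕ} (H : SimpleGraph (Fin n)) [DecidableRel H.Adj] : Type :=
  Σ i : Fin n, Fin (2 * H.degree i - 1)

/-- The first snapshot `G₁`: the disjoint union of the vertex-gadget paths, i.e. the
edges `(a_i^j, b_i^j)` and `(b_i^j, a_i^{j+1})` — consecutive vertices of each gadget. -/
def snapOne {n : ℕ} (H : SimpleGraph (Fin n)) [DecidableRel H.Adj] :
    SimpleGraph (GadgetV H) :=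
  SimpleGraph.fromRel (fun x y => x.1 = y.1 ∧ (x.2 : ℕ) + 1 = (y.2 : ℕ))

/-- The second snapshot `G₂`: given for every vertex `i` of `H` an enumeration `enum i` of
its incident edges (equivalently, of its neighbours), for every edge `(v_i, v_j)` of `H`
that is the `p`-th edge of `v_i` and the `q`-th edge of `v_j` we put the single matching
edge `(a_i^p, a_j^q)` (the `a`-vertices sit at the even positions `2 * (p-1)`, `2 * (q-1)`). -/
def snapTwo {n : ℕ} (H : SimpleGraph (Fin n)) [DecidableRel H.Adj]
    (enum : ∀ i : Fin n, {j // H.Adj i j} ≃ Fin (H.degree i)) :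
    SimpleGraph (GadgetV H) :=
  SimpleGraph.fromRel (fun x y => ∃ h : H.Adj x.1 y.1,
    (x.2 : ℕ) = 2 * ((enum x.1) ⟨y.1, h⟩ : ℕ) ∧ (y.2 : ℕ) = 2 * ((enum y.1) ⟨x.1, h.symm⟩ : ℕ))

/-- The neighbour of `x.1` reached through the edge with index `⌊x.2 / 2⌋` in the enumeration at
`x.1`. For an `a`-vertex this is the other endpoint of its own edge; a `b`-vertex gets the value of
the `a`-vertex preceding it. -/
def gadgetNbr {n : ℕ} (H : SimpleGraph (Fin n)) [DecidableRel H.Adj]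
    (enum : ∀ i : Fin n, {j // H.Adj i j} ≃ Fin (H.degree i)) (x : GadgetV H) : Fin n :=
  ((enum x.1).symm ⟨(x.2 : ℕ) / 2, by have := x.2.2; omega⟩).1

/-- The edge of `H` attached to a gadget vertex. -/
def gadgetEdge {n : ℕ} (H : SimpleGraph (Fin n)) [DecidableRel H.Adj]
    (enum : ∀ i : Fin n, {j // H.Adj i j} ≃ Fin (H.degree i)) (x : GadgetV H) : Sym2 (Fin n) :=
  s(x.1, gadgetNbr H enum x)

section

variable {n : ℕ} {H : SimpleGraph (Fin n)} [DecidableRel H.Adj]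
  {enum : ∀ i : Fin n, {j // H.Adj i j} ≃ Fin (H.degree i)}

lemma adj_gadgetNbr (x : GadgetV H) : H.Adj x.1 (gadgetNbr H enum x) :=
  ((enum x.1).symm ⟨(x.2 : ℕ) / 2, by have := x.2.2; omega⟩).2

lemma gadgetNbr_of_val_eq (x : GadgetV H) (j : Fin n) (h : H.Adj x.1 j)
    (hx : (x.2 : ℕ) = 2 * (enum x.1 ⟨j, h⟩ : ℕ)) : gadgetNbr H enum x = j := by
  have h2 : (⟨(x.2 : ℕ) / 2, by have := x.2.2; omega⟩ : Fin (H.degree x.1)) = enum x.1 ⟨j, h⟩ := by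
    ext
    simp [hx]
  simp only [gadgetNbr, h2, Equiv.symm_apply_apply]

lemma snapTwo_adj {x y : GadgetV H} (h : (snapTwo H enum).Adj x y) :
    (x.2 : ℕ) % 2 = 0 ∧ (y.2 : ℕ) % 2 = 0 ∧ gadgetNbr H enum x = y.1 ∧
      gadgetNbr H enum y = x.1 := by
  rw [snapTwo, SimpleGraph.fromRel_adj] at h
  obtain ⟨-, ⟨h, h1, h2⟩ | ⟨h, h1, h2⟩⟩ := h
  · exact ⟨by omega, by omega, gadgetNbr_of_val_eq _ _ _ h1, gadgetNbr_of_val_eq _ _ _ h2⟩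
  · exact ⟨by omega, by omega, gadgetNbr_of_val_eq _ _ _ h2, gadgetNbr_of_val_eq _ _ _ h1⟩

/-- An `a`-vertex is determined by its gadget and the neighbour its edge leads to. -/
lemma eq_of_gadgetNbr_eq {x y : GadgetV H} (hx : (x.2 : ℕ) % 2 = 0) (hy : (y.2 : ℕ) % 2 = 0)
    (h1 : x.1 = y.1) (h2 : gadgetNbr H enum x = gadgetNbr H enum y) : x = y := by
  obtain ⟨i, x⟩ := x
  obtain ⟨j, y⟩ := y
  obtain rfl : i = j := h1
  have h3 := congrArg Fin.val ((enum i).symm.injective (Subtype.ext h2))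
  simp only at h3 hx hy
  have h4 : x = y := Fin.ext (by omega)
  rw [h4]

/-- In a proper 2-colouring of the gadget paths, all `a`-vertices of a gadget share the colour of
the first one. -/
lemma snapOne_even {ψ : GadgetV H → Fin 2} (hψ : ∀ x y, (snapOne H).Adj x y → ψ x ≠ ψ y)
    (i : Fin n) (h0 : 0 < 2 * H.degree i - 1) (t : ℕ) (ht : 2 * t < 2 * H.degree i - 1) :
    ψ ⟨i, ⟨2 * t, ht⟩⟩ = ψ ⟨i, ⟨0, h0⟩⟩ := by
  induction t with
  | zero => rfl
  | succ t ih =>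
    rw [← ih (by omega)]
    have h1 := hψ ⟨i, ⟨2 * t, by omega⟩⟩ ⟨i, ⟨2 * t + 1, by omega⟩⟩
      (by simp [snapOne, SimpleGraph.fromRel_adj])
    have h2 := hψ ⟨i, ⟨2 * t + 1, by omega⟩⟩ ⟨i, ⟨2 * (t + 1), ht⟩⟩
      (by simp [snapOne, SimpleGraph.fromRel_adj]; omega)
    generalize ψ ⟨i, ⟨2 * t, _⟩⟩ = a at *
    generalize ψ ⟨i, ⟨2 * t + 1, _⟩⟩ = b at *
    generalize ψ ⟨i, ⟨2 * (t + 1), _⟩⟩ = d at *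
    omega

end

/-- For a graph `H` on `n` vertices (each of degree at least `1`) with `m`
edges, the temporal graph `𝒢 = (G₁, G₂)` built from vertex gadgets and edge gadgets admits
a temporal sequence 2-colouring of cost at most `k` if and only if the vertex set of `H`
can be partitioned into two colour classes with at most `k` monochromatic edges. -/
theorem stmt0 {n m : ℕ} (H : SimpleGraph (Fin n)) [DecidableRel H.Adj]
    (hdeg : ∀ i : Fin n, 1 ≤ H.degree i) (hm : H.edgeFinset.card = m)
    (enum : ∀ i : Fin n, {j // H.Adj i j} ≃ Fin (H.degree i)) (k : ℕ) :
    (∃ ψ₁ ψ₂ : GadgetV H → Fin 2,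
      (∀ x y, (snapOne H).Adj x y → ψ₁ x ≠ ψ₁ y) ∧
      (∀ x y, (snapTwo H enum).Adj x y → ψ₂ x ≠ ψ₂ y) ∧
      (Finset.univ.filter fun x => ψ₁ x ≠ ψ₂ x).card ≤ k) ↔
    (∃ c : Fin n → Fin 2,
      (H.edgeFinset.filter fun e => (e.map c).IsDiag).card ≤ k) := by
  constructor
  · rintro ⟨ψ₁, ψ₂, hψ₁, hψ₂, hk⟩
    have h0 : ∀ i, 0 < 2 * H.degree i - 1 := fun i => by have := hdeg i; omega
    refine ⟨fun i => ψ₁ ⟨i, ⟨0, h0 i⟩⟩, le_trans ?_ hk⟩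
    refine le_trans (card_le_card ?_) (card_image_le (f := gadgetEdge H enum))
    intro e
    induction e with
    | _ i j =>
      simp only [mem_filter, SimpleGraph.mem_edgeFinset, SimpleGraph.mem_edgeSet, Sym2.map_mk,
        Sym2.mk_isDiag_iff, mem_image, mem_univ, true_and]
      rintro ⟨hij, hc⟩
      have hp := (enum i ⟨j, hij⟩).2
      have hq := (enum j ⟨i, hij.symm⟩).2
      -- the two ends of the matching edge of `G₂` that represents the edge `ij`
      let x : GadgetV H := ⟨i, ⟨2 * (enum i ⟨j, hij⟩ : ℕ), by omega⟩⟩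
      let y : GadgetV H := ⟨j, ⟨2 * (enum j ⟨i, hij.symm⟩ : ℕ), by omega⟩⟩
      have hx : gadgetNbr H enum x = j := gadgetNbr_of_val_eq x j hij rfl
      have hy : gadgetNbr H enum y = i := gadgetNbr_of_val_eq y i hij.symm rfl
      have hxy : (snapTwo H enum).Adj x y := by
        rw [snapTwo, SimpleGraph.fromRel_adj]
        exact ⟨fun h => hij.ne (congrArg Sigma.fst h), Or.inl ⟨hij, rfl, rfl⟩⟩
      have h1 : ψ₁ x = ψ₁ y :=
        (snapOne_even hψ₁ i (h0 i) _ _).trans (hc.trans (snapOne_even hψ₁ j (h0 j) _ _).symm)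
      have h2 := hψ₂ x y hxy
      by_cases hch : ψ₁ x = ψ₂ x
      · exact ⟨y, fun h => h2 (by rw [← hch, h1, h]), by rw [gadgetEdge, hy, Sym2.eq_swap]⟩
      · exact ⟨x, hch, by rw [gadgetEdge, hx]⟩
  · rintro ⟨c, hc⟩
    have hne : ∀ a : Fin 2, a ≠ a + 1 := by decide
    have hcases : ∀ a b : Fin 2, a ≠ b → a + 1 ≠ b + 1 := by decide
    -- the `a`-vertices to recolour: those at the larger endpoint of a monochromatic edge
    let P : GadgetV H → Prop := fun x =>
      (x.2 : ℕ) % 2 = 0 ∧ c x.1 = c (gadgetNbr H enum x) ∧ gadgetNbr H enum x < x.1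
    let ψ₁ : GadgetV H → Fin 2 := fun x => if (x.2 : ℕ) % 2 = 0 then c x.1 else c x.1 + 1
    classical
    refine ⟨ψ₁, fun x => if P x then ψ₁ x + 1 else ψ₁ x, ?_, ?_, le_trans ?_ hc⟩
    · rintro ⟨i, x⟩ ⟨j, y⟩ h
      rw [snapOne, SimpleGraph.fromRel_adj] at h
      obtain ⟨-, h⟩ := h
      simp only at h
      obtain rfl : i = j := h.elim (fun h => h.1) (fun h => h.1.symm)
      have hpar : (x : ℕ) % 2 ≠ (y : ℕ) % 2 := by omega
      simp only [ψ₁]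
      split_ifs with h1 h2 h2
      · omega
      · exact hne _
      · exact (hne _).symm
      · omega
    · intro x y h
      obtain ⟨hx, hy, hxy, hyx⟩ := snapTwo_adj h
      have hadj : H.Adj x.1 y.1 := hxy ▸ adj_gadgetNbr (enum := enum) x
      simp only [P, ψ₁, hx, hy, hxy, hyx, true_and, if_true]
      by_cases hcc : c x.1 = c y.1
      · rcases lt_or_gt_of_ne hadj.ne with hl | hl
        · simp only [hcc, hl, hl.not_gt, and_false, and_true, if_true, if_false]
          exact hne _
        · simp only [hcc, hl, hl.not_gt, and_false, and_true, if_true, if_false]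
          exact (hne _).symm
      · simp only [hcc, Ne.symm hcc, false_and, if_false]
        exact hcc
    · have hP : ∀ x, ψ₁ x ≠ (if P x then ψ₁ x + 1 else ψ₁ x) → P x := by
        intro x hx
        by_contra h
        simp [h] at hx
      refine card_le_card_of_injOn (gadgetEdge H enum) ?_ ?_
      · intro x hx
        obtain ⟨-, h, -⟩ := hP x (by simpa using hx)
        simpa [gadgetEdge] using ⟨adj_gadgetNbr x, h⟩
      · intro x hx y hy hxy
        obtain ⟨hx0, -, hx2⟩ := hP x (by simpa using hx)
        obtain ⟨hy0, -, hy2⟩ := hP y (by simpa using hy)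
        rcases Sym2.eq_iff.1 hxy with ⟨h1, h2⟩ | ⟨h1, h2⟩
        · exact eq_of_gadgetNbr_eq hx0 hy0 h1 h2
        · rw [h1, h2] at hx2
          exact absurd hx2 hy2.not_gt
end

section
/- Let 𝒢 = G_1, …, G_T be a temporal graph on n vertices in which every snapshot is bipartite, and let Ψ be a temporal sequence 2-colouring of 𝒢. Then there exists a 2-colouring of the auxiliary static graph α(𝒢) in which the number of monochromatic edges is exactly Cost(Ψ). -/
/-!
Flip the colours of `Ψ` at every odd time step, i.e. take `χ (v, t) = Ψ t v + t` modulo 2.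
Within one snapshot this flips all colours or none, and a proper 2-colouring alternates along
walks, so the endpoints of an odd walk still differ: no edge of `S` is monochromatic
(`odd_walk_ne`). Between consecutive times the flip exchanges equality and inequality, so the edge
of `C` from `(v, t)` to `(v, t + 1)` is monochromatic exactly when `Ψ t v ≠ Ψ (t + 1) v`
(`mono_edge_iff`). Hence monochromatic edges correspond bijectively to the pairs counted by the
cost.
-/

open Finset

/-- The cost of a temporal sequence colouring `Ψ` of a temporal graph of lifetime `T`
(snapshots indexed `0, 1, …, T - 1`): the number of pairs `(v, t)` with `t` a
non-final time step such that `v` changes colour between snapshots `t` and `t + 1`. -/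
def tCost {V : Type*} [Fintype V] (T : ℕ) (Ψ : ℕ → V → Fin 2) : ℕ :=
  ∑ t ∈ Finset.range (T - 1), (Finset.univ.filter fun v => Ψ t v ≠ Ψ (t + 1) v).card

/-- The auxiliary static graph `α(𝒢)` on the vertex set `V × Fin T`: the edge set is
`C ∪ S`, where `C` joins `(v, t)` to `(v, t + 1)` for every vertex `v` and every
non-final time step `t`, and `S` joins `(v, t)` to `(w, t)` whenever `v` and `w` are
joined in the snapshot `G t` by a walk of odd length (equivalently, they lie in the same
connected component of `G t` and get different colours in every proper 2-colouring of it). -/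
def alphaGraph {V : Type*} (T : ℕ) (G : ℕ → SimpleGraph V) :
    SimpleGraph (V × Fin T) :=
  SimpleGraph.fromRel (fun x y =>
    (x.1 = y.1 ∧ (x.2 : ℕ) + 1 = (y.2 : ℕ)) ∨
    ((x.2 : ℕ) = (y.2 : ℕ) ∧ ∃ p : (G (x.2 : ℕ)).Walk x.1 y.1, Odd p.length))

/-- The number of monochromatic edges of the static graph `A` under the 2-colouring `χ`. -/
noncomputable def monoCount {W : Type*} (A : SimpleGraph W) (χ : W → Fin 2) : ℕ :=
  {e : Sym2 W | e ∈ A.edgeSet ∧ (e.map χ).IsDiag}.ncard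

theorem walk_color {V : Type*} {H : SimpleGraph V} {c : V → Fin 2}
    (hc : ∀ u v, H.Adj u v → c u ≠ c v) {u v : V} (p : H.Walk u v) :
    Odd p.length ↔ c u ≠ c v := by
  induction p with
  | nil => simp
  | cons h p ih =>
    have := hc _ _ h
    rw [SimpleGraph.Walk.length_cons, Nat.odd_add_one, ih]
    omega

theorem odd_walk_ne {V : Type*} {H : SimpleGraph V} {c : V → Fin 2}
    (hc : ∀ u v, H.Adj u v → c u ≠ c v) {u v : V} (p : H.Walk u v) (hp : Odd p.length) :
    c u ≠ c v := (walk_color hc p).1 hp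

/-- The colouring of `α(𝒢)` obtained from `Ψ` by exchanging the two colours at odd times. -/
def flipColor {V : Type*} (T : ℕ) (Ψ : ℕ → V → Fin 2) (x : V × Fin T) : Fin 2 :=
  Ψ x.2 x.1 + Fin.ofNat 2 x.2

theorem flip_succ (a b : Fin 2) (t : ℕ) :
    a + Fin.ofNat 2 t = b + Fin.ofNat 2 (t + 1) ↔ a ≠ b := by
  have : Fin.ofNat 2 (t + 1) = Fin.ofNat 2 t + 1 := by
    ext; simp [Fin.val_add, Fin.ofNat]
  rw [this]
  generalize Fin.ofNat 2 t = k
  revert a b k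
  decide

/-- The monochromatic edges of `α(𝒢)` are the edges of `C` at which `Ψ` changes colour. -/
theorem mono_edge_iff {V : Type*} (T : ℕ) (G : ℕ → SimpleGraph V) (Ψ : ℕ → V → Fin 2)
    (hΨ : ∀ t < T, ∀ u v, (G t).Adj u v → Ψ t u ≠ Ψ t v) (e : Sym2 (V × Fin T)) :
    (e ∈ (alphaGraph T G).edgeSet ∧ (e.map (flipColor T Ψ)).IsDiag) ↔
      ∃ (t : ℕ) (h : t + 1 < T) (v : V), Ψ t v ≠ Ψ (t + 1) v ∧
        s((v, (⟨t, by omega⟩ : Fin T)), (v, (⟨t + 1, h⟩ : Fin T))) = e := by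
  constructor
  · induction e with
    | _ x y =>
    obtain ⟨v, t, ht⟩ := x
    obtain ⟨w, r, hr⟩ := y
    simp only [alphaGraph, SimpleGraph.mem_edgeSet, SimpleGraph.fromRel_adj, Sym2.map_mk,
      Sym2.mk_isDiag_iff, flipColor]
    rintro ⟨⟨-, (⟨rfl, rfl⟩ | ⟨rfl, p, hp⟩) | (⟨rfl, rfl⟩ | ⟨rfl, p, hp⟩)⟩, hm⟩
    · exact ⟨t, hr, v, (flip_succ _ _ _).1 hm, rfl⟩
    · exact absurd (add_right_cancel hm) (odd_walk_ne (hΨ _ ht) p hp)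
    · exact ⟨r, ht, w, (flip_succ _ _ _).1 hm.symm, Sym2.eq_swap⟩
    · exact absurd (add_right_cancel hm).symm (odd_walk_ne (hΨ _ hr) p hp)
  · rintro ⟨t, h, v, hne, rfl⟩
    simp only [alphaGraph, SimpleGraph.mem_edgeSet, SimpleGraph.fromRel_adj, Sym2.map_mk,
      Sym2.mk_isDiag_iff, flipColor]
    exact ⟨⟨by simp, by simp⟩, (flip_succ _ _ _).2 hne⟩

/-- If every snapshot of the temporal graph `𝒢 = G_0, …, G_{T-1}` is
bipartite and `Ψ` is a temporal sequence 2-colouring of `𝒢`, then there is a 2-colouring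
of the auxiliary graph `α(𝒢)` whose number of monochromatic edges equals `Cost(Ψ)`. -/
theorem stmt1 {V : Type*} [Fintype V] (T : ℕ) (G : ℕ → SimpleGraph V)
    (hbip : ∀ t < T, ∃ c : V → Fin 2, ∀ u v, (G t).Adj u v → c u ≠ c v)
    (Ψ : ℕ → V → Fin 2)
    (hΨ : ∀ t < T, ∀ u v, (G t).Adj u v → Ψ t u ≠ Ψ t v) :
    ∃ χ : V × Fin T → Fin 2, monoCount (alphaGraph T G) χ = tCost T Ψ := by
  refine ⟨flipColor T Ψ, ?_⟩
  unfold monoCount tCost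
  rw [← Finset.card_sigma, ← Set.ncard_coe_finset]
  symm
  have key : ∀ a ∈ ((Finset.range (T - 1)).sigma fun t =>
      Finset.univ.filter fun v => Ψ t v ≠ Ψ (t + 1) v), a.1 + 1 < T := by
    intro a ha
    have := Finset.mem_range.1 (Finset.mem_sigma.1 ha).1
    omega
  refine Set.ncard_congr (fun a ha =>
    s((a.2, (⟨a.1, by have := key a ha; omega⟩ : Fin T)),
      (a.2, (⟨a.1 + 1, key a ha⟩ : Fin T)))) ?_ ?_ ?_
  · intro a ha
    refine (mono_edge_iff T G Ψ hΨ _).2 ⟨a.1, key a ha, a.2, ?_, rfl⟩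
    exact (Finset.mem_filter.1 (Finset.mem_sigma.1 ha).2).2
  · rintro ⟨t, v⟩ ⟨r, w⟩ ha hb h
    simp only [Sym2.eq_iff, Prod.mk.injEq, Fin.mk.injEq] at h
    obtain ⟨⟨rfl, rfl⟩, -⟩ | ⟨⟨-, h1⟩, -, h2⟩ := h
    · rfl
    · omega
  · intro e he
    obtain ⟨t, h, v, hne, rfl⟩ := (mono_edge_iff T G Ψ hΨ e).1 he
    refine ⟨⟨t, v⟩, ?_, rfl⟩
    simp only [Finset.coe_sigma, Finset.mem_coe, Set.mem_sigma_iff, Finset.mem_range,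
      Finset.mem_filter, Finset.mem_univ, true_and]
    exact ⟨by omega, hne⟩
end

section
/- Let 𝒢 = G_1, …, G_T be a temporal graph on n vertices in which every snapshot is bipartite, and suppose there is a 2-colouring of the auxiliary static graph α(𝒢) with at most M monochromatic edges. Then there exists a temporal sequence 2-colouring Ψ of 𝒢 with Cost(Ψ) ≤ 2M. -/
/-!
Twisting `χ` by the parity of time, `f t v = χ (v, t) + t mod 2`, turns a monochromatic
temporal edge of `α(𝒢)` into a colour change of `f`, while the monochromatic edges inside one
snapshot remain the same. In every snapshot a proper colouring `ψ t` is chosen such that each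
*wrong* vertex (`ψ t v ≠ f t v`) is joined by an odd walk to a right one
(`exists_proper_colouring_near`): on each component one of its two proper colourings works.
As `v` and its right partner `u` get different colours under `ψ t`, they get the same colour
under `f t`, so `{(v, t), (u, t)}` is a monochromatic edge of `α(𝒢)`; it contains exactly one
wrong vertex, hence distinct wrong vertices give distinct edges. If `ψ` changes at `v` between
`t` and `t + 1`, then `f` does, or `v` is wrong at `t`, or `v` is wrong at `t + 1`. So the cost
is at most `#(temporal monochromatic edges) + 2 * #(monochromatic edges inside snapshots)`.
-/

open Finset

/-- A proper 2-colouring separates the ends of a walk exactly when its length is odd. -/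
lemma ne_iff_odd_walk_length {V : Type*} {H : SimpleGraph V} {c : V → Fin 2}
    (hc : ∀ u v, H.Adj u v → c u ≠ c v) {u v : V} (p : H.Walk u v) :
    c u ≠ c v ↔ Odd p.length := by
  induction p with
  | nil => simp
  | @cons a b d h p ih =>
    have h1 := hc _ _ h
    rw [SimpleGraph.Walk.length_cons, Nat.odd_add_one, ← ih]
    generalize c a = x at *
    generalize c b = y at *
    generalize c d = z at *
    clear ih
    revert x y z
    decide

/-- On each component one of the two proper colourings has every vertex that disagrees with `f`
joined by an odd walk to a vertex that agrees with `f`. If a colouring `c` fails this at `w`, then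
the whole class opposite to `w` disagrees with `f`, so it agrees after swapping the colours. -/
lemma exists_proper_colouring_near {V : Type*} {H : SimpleGraph V} {c : V → Fin 2}
    (hc : ∀ u v, H.Adj u v → c u ≠ c v) (f : V → Fin 2) :
    ∃ ψ : V → Fin 2, (∀ u v, H.Adj u v → ψ u ≠ ψ v) ∧
      ∀ v, ∃ u, ψ v ≠ f v → (∃ p : H.Walk v u, Odd p.length) ∧ ψ u = f u := by
  classical
  let Bad : V → Prop := fun v => ∃ w, H.Reachable w v ∧ c w ≠ f w ∧
    ∀ u, (∃ p : H.Walk w u, Odd p.length) → c u ≠ f u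
  have hBad : ∀ u v, H.Reachable u v → (Bad u ↔ Bad v) := by
    intro u v h
    constructor
    · rintro ⟨w, h1, h2⟩
      exact ⟨w, h1.trans h, h2⟩
    · rintro ⟨w, h1, h2⟩
      exact ⟨w, h1.trans h.symm, h2⟩
  have flip : ∀ a b : Fin 2, a ≠ b → a + 1 = b := by decide
  refine ⟨fun v => if Bad v then c v + 1 else c v, ?_, ?_⟩
  · intro u v h
    have h1 := hc u v h
    have h2 := hBad u v h.reachable
    by_cases hb : Bad v
    · simpa [h2.2 hb, hb] using h1
    · simpa [mt h2.1 hb, hb] using h1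
  · intro v
    by_cases hv : (if Bad v then c v + 1 else c v) = f v
    · exact ⟨v, fun h => absurd hv h⟩
    by_cases hb : Bad v
    · rw [if_pos hb] at hv
      have hv' : c v = f v := by
        by_contra h
        exact hv (flip _ _ h)
      obtain ⟨w, ⟨p⟩, hw, hall⟩ := id hb
      have hp : ¬ Odd p.length := fun h => hall v ⟨p, h⟩ hv'
      obtain ⟨q⟩ : H.Reachable v w := ⟨p.reverse⟩
      cases q with
      | nil => exact absurd hv' hw
      | @cons _ u _ h q =>
        refine ⟨u, fun _ => ⟨⟨h.toWalk, by simp⟩, ?_⟩⟩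
        have hu : c u ≠ f u := by
          refine hall u ⟨p.concat h, ?_⟩
          rw [SimpleGraph.Walk.length_concat]
          exact Nat.odd_add_one.2 hp
        simp only [if_pos ((hBad v u h.reachable).1 hb)]
        exact flip _ _ hu
    · rw [if_neg hb] at hv
      have : ∃ u, (∃ p : H.Walk v u, Odd p.length) ∧ c u = f u := by
        by_contra! h
        exact hb ⟨v, SimpleGraph.Reachable.refl v, hv, fun u hp => h u hp⟩
      obtain ⟨u, ⟨p, hp⟩, hu⟩ := this
      refine ⟨u, fun _ => ⟨⟨p, hp⟩, ?_⟩⟩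
      simp only [if_neg (mt (hBad v u ⟨p⟩).2 hb)]
      exact hu

/-- If every snapshot of the temporal graph `𝒢 = G_0, …, G_{T-1}` is
bipartite and there is a 2-colouring of the auxiliary graph `α(𝒢)` with at most `M`
monochromatic edges, then `𝒢` admits a temporal sequence 2-colouring of cost at most `2 * M`. -/
theorem stmt2 {V : Type*} [Fintype V] (T : ℕ) (G : ℕ → SimpleGraph V)
    (hbip : ∀ t < T, ∃ c : V → Fin 2, ∀ u v, (G t).Adj u v → c u ≠ c v)
    (M : ℕ) (χ : V × Fin T → Fin 2)
    (hχ : monoCount (alphaGraph T G) χ ≤ M) :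
    ∃ Ψ : ℕ → V → Fin 2,
      (∀ t < T, ∀ u v, (G t).Adj u v → Ψ t u ≠ Ψ t v) ∧ tCost T Ψ ≤ 2 * M := by
  classical
  obtain _ | n := T
  · exact ⟨fun _ _ => 0, by simp, by simp [tCost]⟩
  let par : ℕ → Fin 2 := fun t => if Even t then 0 else 1
  have hpar : ∀ t, par (t + 1) = par t + 1 := by
    intro t
    by_cases h : Even t <;> simp [par, Nat.even_add_one, h]
  let f : Fin (n + 1) → V → Fin 2 := fun t v => χ (v, t) + par t
  have key : ∀ t : Fin (n + 1), ∃ ψ : V → Fin 2, (∀ u v, (G t).Adj u v → ψ u ≠ ψ v) ∧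
      ∀ v, ∃ u, ψ v ≠ f t v → (∃ p : (G t).Walk v u, Odd p.length) ∧ ψ u = f t u := by
    intro t
    obtain ⟨c, hc⟩ := hbip t t.2
    exact exists_proper_colouring_near hc (f t)
  choose ψ hψ u hu using key
  refine ⟨fun t => if h : t < n + 1 then ψ ⟨t, h⟩ else fun _ => 0, ?_, ?_⟩
  · intro t ht a b hab
    simp only [dif_pos ht]
    exact hψ ⟨t, ht⟩ a b hab
  -- `D`: changes of `ψ`; `C`: changes of `f`; `W`: wrong vertices.
  let D : Finset (Fin n × V) := univ.filter fun x => ψ x.1.castSucc x.2 ≠ ψ x.1.succ x.2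
  let C : Finset (Fin n × V) := univ.filter fun x => f x.1.castSucc x.2 ≠ f x.1.succ x.2
  let W : Finset (Fin (n + 1) × V) := univ.filter fun x => ψ x.1 x.2 ≠ f x.1 x.2
  have hcost : tCost (n + 1)
      (fun t => if h : t < n + 1 then ψ ⟨t, h⟩ else fun _ => 0) = D.card := by
    rw [tCost, Nat.add_sub_cancel, Finset.sum_range]
    simp only [D, Finset.card_filter, Fintype.sum_prod_type]
    refine Finset.sum_congr rfl fun t _ => Finset.sum_congr rfl fun v _ => ?_
    have h1 : (t : ℕ) < n + 1 := by omega
    have h2 : (t : ℕ) + 1 < n + 1 := by omega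
    simp only [dif_pos h1, dif_pos h2]
    rfl
  rw [hcost]
  let W0 : Finset (Fin n × V) := univ.filter fun x => (x.1.castSucc, x.2) ∈ W
  let W1 : Finset (Fin n × V) := univ.filter fun x => (x.1.succ, x.2) ∈ W
  have hD : D ⊆ C ∪ (W0 ∪ W1) := by
    intro x hx
    simp only [D, C, W0, W1, W, mem_union, mem_filter, mem_univ, true_and] at hx ⊢
    by_contra! h
    exact hx (h.2.1.trans (h.1.trans h.2.2.symm))
  have hW0 : W0.card ≤ W.card := by
    refine Finset.card_le_card_of_injOn (fun x => (x.1.castSucc, x.2)) ?_ ?_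
    · intro x hx
      exact (mem_filter.1 hx).2
    · rintro ⟨a, b⟩ _ ⟨a', b'⟩ _ h
      simpa using h
  have hW1 : W1.card ≤ W.card := by
    refine Finset.card_le_card_of_injOn (fun x => (x.1.succ, x.2)) ?_ ?_
    · intro x hx
      exact (mem_filter.1 hx).2
    · rintro ⟨a, b⟩ _ ⟨a', b'⟩ _ h
      simpa using h
  let eC : Fin n × V → Sym2 (V × Fin (n + 1)) := fun x => s((x.2, x.1.castSucc), (x.2, x.1.succ))
  let eS : Fin (n + 1) × V → Sym2 (V × Fin (n + 1)) := fun x => s((x.2, x.1), (u x.1 x.2, x.1))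
  have hCinj : (C.image eC).card = C.card := by
    refine Finset.card_image_of_injOn ?_
    rintro ⟨a, b⟩ _ ⟨a', b'⟩ _ h
    simp only [eC, Sym2.eq_iff, Prod.mk.injEq, Fin.ext_iff, Fin.val_castSucc, Fin.val_succ] at h
    ext
    · simp only
      omega
    · simp only
      rcases h with h | h
      · exact h.1.1
      · exact h.1.1
  have hSinj : (W.image eS).card = W.card := by
    refine Finset.card_image_of_injOn ?_
    rintro ⟨a, b⟩ hx ⟨a', b'⟩ hy h
    simp only [W, coe_filter, mem_univ, true_and, Set.mem_ofPred_eq] at hx hy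
    simp only [eS, Sym2.eq_iff, Prod.mk.injEq] at h
    rcases h with ⟨⟨h1, h2⟩, -⟩ | ⟨⟨h1, h2⟩, -⟩
    · rw [h1, h2]
    -- A swap would make `b` both wrong and the right partner of `b'`.
    · subst h2
      subst h1
      exact absurd (hu _ _ hy).2 hx
  have hdisj : Disjoint (C.image eC) (W.image eS) := by
    rw [Finset.disjoint_left]
    intro e h1 h2
    obtain ⟨⟨a, b⟩, -, rfl⟩ := mem_image.1 h1
    obtain ⟨⟨a', b'⟩, -, h⟩ := mem_image.1 h2
    simp only [eC, eS, Sym2.eq_iff, Prod.mk.injEq, Fin.ext_iff, Fin.val_castSucc,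
      Fin.val_succ] at h
    omega
  have hsub : (↑(C.image eC ∪ W.image eS) : Set (Sym2 (V × Fin (n + 1)))) ⊆
      {e | e ∈ (alphaGraph (n + 1) G).edgeSet ∧ (e.map χ).IsDiag} := by
    intro e he
    rw [mem_coe, mem_union] at he
    rcases he with he | he
    · obtain ⟨⟨t, v⟩, hx, rfl⟩ := mem_image.1 he
      have hx' : χ (v, t.castSucc) + par t ≠ χ (v, t.succ) + par (t + 1) := (mem_filter.1 hx).2
      refine ⟨?_, ?_⟩
      · simp only [eC, SimpleGraph.mem_edgeSet, alphaGraph, SimpleGraph.fromRel_adj]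
        refine ⟨?_, Or.inl (Or.inl ⟨trivial, by simp⟩)⟩
        simp [Fin.ext_iff]
      · simp only [eC, Sym2.map_mk, Sym2.mk_isDiag_iff]
        rw [hpar] at hx'
        generalize χ (v, t.castSucc) = a at *
        generalize χ (v, t.succ) = b at *
        generalize par t = p at *
        clear hx
        revert a b p
        decide
    · obtain ⟨⟨t, v⟩, hx, rfl⟩ := mem_image.1 he
      have hx' : ψ t v ≠ f t v := (mem_filter.1 hx).2
      obtain ⟨⟨p, hp⟩, hr⟩ := hu t v hx'
      have hne := (ne_iff_odd_walk_length (hψ t) p).2 hp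
      refine ⟨?_, ?_⟩
      · simp only [eS, SimpleGraph.mem_edgeSet, alphaGraph, SimpleGraph.fromRel_adj]
        refine ⟨?_, Or.inl (Or.inr ⟨trivial, p, hp⟩)⟩
        intro h
        exact hne (congrArg (ψ t) (Prod.ext_iff.1 h).1)
      · have three : ∀ a b c d : Fin 2, a ≠ b → c = d → a ≠ c → b = d := by decide
        have h : f t v = f t (u t v) := three _ _ _ _ hx' hr hne
        simp only [eS, Sym2.map_mk, Sym2.mk_isDiag_iff]
        exact add_right_cancel h
  have hM : C.card + W.card ≤ M := by
    rw [← hCinj, ← hSinj, ← Finset.card_union_of_disjoint hdisj, ← Set.ncard_coe_finset]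
    exact (Set.ncard_le_ncard hsub (Set.toFinite _)).trans hχ
  have h1 := Finset.card_le_card hD
  have h2 := Finset.card_union_le C (W0 ∪ W1)
  have h3 := Finset.card_union_le W0 W1
  omega
end

section
/- Let G = (V,E) be a finite graph with edges e_1, …, e_m (m ≥ 1), let C ≥ 1, and let 𝒢 = G_1, …, G_m be the temporal graph on V in which the snapshot G_t contains exactly the single edge e_t. Then every vertex has degree at most 1 in every snapshot of 𝒢, and 𝒢 admits a temporal sequence C-colouring of cost 0 if and only if G admits a proper C-colouring. -/
/-!
A sequence of colourings has cost `0` exactly when it is constant over the lifetime, so a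
cost-`0` temporal colouring is a single colouring that is proper for every snapshot. Since
the snapshots' edges are together exactly the edges of `G`, this is the same as a proper
colouring of `G`. The degree bound holds because a vertex of a single edge determines the
other endpoint.
-/

open Finset

/-- The cost of a temporal sequence `C`-colouring `Ψ` of a temporal graph of lifetime `T`
(snapshots indexed `0, 1, …, T - 1`): the number of pairs `(v, t)` with `t` a non-final
time step such that `v` changes colour between snapshots `t` and `t + 1`. -/
def tCostC {V : Type*} [Fintype V] (C T : ℕ) (Ψ : ℕ → V → Fin C) : ℕ :=
  ∑ t ∈ Finset.range (T - 1), (Finset.univ.filter fun v => Ψ t v ≠ Ψ (t + 1) v).card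

/-- Let `G` be a finite graph whose edges are enumerated (without
repetition) as `e 0, …, e (m - 1)` with `m ≥ 1`, let `C ≥ 1`, and let `𝒢` be the temporal
graph of lifetime `m` whose `t`-th snapshot consists of exactly the single edge `e t`.
Then every vertex has degree at most `1` in every snapshot of `𝒢`, and `𝒢` admits a
temporal sequence `C`-colouring of cost `0` if and only if `G` admits a proper
`C`-colouring. -/
theorem stmt6 {V : Type*} [Fintype V] (G : SimpleGraph V) (m C : ℕ)
    (hm : 1 ≤ m) (hC : 1 ≤ C) (e : ℕ → Sym2 V)
    (hmem : ∀ t < m, e t ∈ G.edgeSet)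
    (hall : ∀ s ∈ G.edgeSet, ∃ t < m, e t = s)
    (hinj : Set.InjOn e (Set.Iio m)) :
    (∀ t < m, ∀ v : V,
      ((SimpleGraph.fromEdgeSet {e t}).neighborSet v).ncard ≤ 1) ∧
    ((∃ Ψ : ℕ → V → Fin C,
        (∀ t < m, ∀ u v, (SimpleGraph.fromEdgeSet {e t}).Adj u v → Ψ t u ≠ Ψ t v) ∧
        tCostC C m Ψ = 0) ↔
      (∃ c : V → Fin C, ∀ u v, G.Adj u v → c u ≠ c v)) := by
  refine ⟨fun t _ v => ?_, ?_, ?_⟩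
  · -- Two neighbours `a`, `b` of `v` satisfy `s(v, a) = e t = s(v, b)`, hence `a = b`.
    refine (Set.ncard_le_one (Set.toFinite _)).2 fun a ha b hb => ?_
    simp only [SimpleGraph.mem_neighborSet, SimpleGraph.fromEdgeSet_adj,
      Set.mem_singleton_iff] at ha hb
    exact Sym2.congr_right.1 (ha.1.trans hb.1.symm)
  · rintro ⟨Ψ, hΨ, hcost⟩
    have hstep : ∀ t < m - 1, ∀ v, Ψ t v = Ψ (t + 1) v := by
      intro t ht v
      have h := Finset.sum_eq_zero_iff.1 hcost t (Finset.mem_range.2 ht)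
      rw [Finset.card_eq_zero, Finset.filter_eq_empty_iff] at h
      exact not_not.1 (h (Finset.mem_univ v))
    have hconst : ∀ t < m, ∀ v, Ψ t v = Ψ 0 v := by
      intro t
      induction t with
      | zero => exact fun _ _ => rfl
      | succ k ih =>
        intro hk v
        rw [← hstep k (by omega) v, ih (by omega) v]
    refine ⟨Ψ 0, fun u v huv => ?_⟩
    obtain ⟨t, ht, hte⟩ := hall s(u, v) huv
    have h := hΨ t ht u v ((SimpleGraph.fromEdgeSet_adj _).2 ⟨hte.symm, huv.ne⟩)
    rwa [hconst t ht u, hconst t ht v] at h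
  · rintro ⟨c, hc⟩
    refine ⟨fun _ => c, fun t ht u v huv => hc u v ?_, by simp [tCostC]⟩
    have h : s(u, v) = e t := ((SimpleGraph.fromEdgeSet_adj _).1 huv).1
    rw [← SimpleGraph.mem_edgeSet, h]
    exact hmem t ht
end

section
/- Let V be a finite set and let ψ, χ : V → {0,1} be two maps such that both ψ⁻¹(0) and ψ⁻¹(1) are nonempty. Let k be the number of unordered pairs {u, v} of distinct elements of V with ψ(u) ≠ ψ(v) and χ(u) = χ(v). Then there exists c ∈ {0,1} such that the number of vertices v ∈ V with χ(v) ≠ ψ(v) + c (mod 2) is at most k. Equivalently, χ can be turned into ψ or into the colour-swapped version of ψ by changing the values of χ on at most k elements of V. -/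
/-!
Let `a`, `b`, `c`, `d` be the sizes of the four cells `(ψ, χ) = (0,0), (0,1), (1,0), (1,1)`.
Listing each bad pair with its `ψ = 0` vertex first shows that there are (at least) `a * c + b * d`
of them, while `χ` differs from `ψ` at `b + c` vertices and from the swapped `ψ` at `a + d`
vertices. Both classes of `ψ` being nonempty means `0 < a + b` and `0 < c + d`, and the statement
becomes the arithmetic fact `min (b + c) (a + d) ≤ a * c + b * d`.
-/

/-- If all four numbers are positive, `a * c ≥ a + c - 1` and `b * d ≥ b + d - 1` give a bound of
`(a + d) + (b + c) - 2`, where both brackets are at least `2`. If one of them vanishes, one of the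
two products already dominates the relevant sum. -/
lemma cell_arith (a b c d : ℕ) (hab : 0 < a + b) (hcd : 0 < c + d) :
    b + c ≤ a * c + b * d ∨ a + d ≤ a * c + b * d := by
  rcases Nat.eq_zero_or_pos a with rfl | ha
  · right; nlinarith
  rcases Nat.eq_zero_or_pos b with rfl | hb
  · left; nlinarith
  rcases Nat.eq_zero_or_pos c with rfl | hc
  · left; nlinarith
  rcases Nat.eq_zero_or_pos d with rfl | hd
  · right; nlinarith
  have h1 : a + c ≤ a * c + 1 := by nlinarith
  have h2 : b + d ≤ b * d + 1 := by nlinarith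
  omega

/-- The vertices with prescribed values of `ψ` and `χ`. -/
def cell {V : Type*} [Fintype V] (ψ χ : V → Fin 2) (i j : Fin 2) : Finset V :=
  Finset.univ.filter fun v => ψ v = i ∧ χ v = j

lemma mem_cell {V : Type*} [Fintype V] (ψ χ : V → Fin 2) (i j : Fin 2) (v : V) :
    v ∈ cell ψ χ i j ↔ ψ v = i ∧ χ v = j := by
  simp [cell]

lemma cells_pos {V : Type*} [Fintype V] (ψ χ : V → Fin 2) (i : Fin 2) (h : ∃ v, ψ v = i) :
    0 < (cell ψ χ i 0).card + (cell ψ χ i 1).card := by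
  obtain ⟨v, hv⟩ := h
  have hj : χ v = 0 ∨ χ v = 1 := by omega
  rcases hj with hj | hj
  · have := Finset.card_pos.2 ⟨v, (mem_cell ψ χ i 0 v).2 ⟨hv, hj⟩⟩
    omega
  · have := Finset.card_pos.2 ⟨v, (mem_cell ψ χ i 1 v).2 ⟨hv, hj⟩⟩
    omega

lemma flips_le {V : Type*} [Fintype V] (ψ χ : V → Fin 2) (c : Fin 2) :
    {v | χ v ≠ ψ v + c}.ncard ≤ (cell ψ χ 0 (1 + c)).card + (cell ψ χ 1 c).card := by
  classical
  refine le_trans ?_ (Finset.card_union_le _ _)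
  rw [← Set.ncard_coe_finset]
  refine Set.ncard_le_ncard ?_ (Finset.finite_toSet _)
  intro v hv
  simp only [Set.mem_setOf_eq, Finset.coe_union, Set.mem_union, Finset.mem_coe, mem_cell] at hv ⊢
  revert hv
  generalize ψ v = x
  generalize χ v = y
  revert x y c
  decide

lemma cells_le_pairs {V : Type*} [Fintype V] (ψ χ : V → Fin 2) :
    (cell ψ χ 0 0).card * (cell ψ χ 1 0).card + (cell ψ χ 0 1).card * (cell ψ χ 1 1).card ≤
      {p : Sym2 V | ∃ u v, p = s(u, v) ∧ ψ u ≠ ψ v ∧ χ u = χ v}.ncard := by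
  classical
  have hdisj : Disjoint (cell ψ χ 0 0 ×ˢ cell ψ χ 1 0) (cell ψ χ 0 1 ×ˢ cell ψ χ 1 1) := by
    rw [Finset.disjoint_left]
    rintro ⟨u, v⟩ h h'
    simp only [Finset.mem_product, mem_cell] at h h'
    exact absurd (h.1.2.symm.trans h'.1.2) (by decide)
  rw [← Finset.card_product, ← Finset.card_product, ← Finset.card_union_of_disjoint hdisj,
    ← Set.ncard_coe_finset]
  refine Set.ncard_le_ncard_of_injOn (fun q : V × V => s(q.1, q.2)) ?_ ?_ (Set.toFinite _)
  · rintro ⟨u, v⟩ h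
    simp only [Finset.coe_union, Set.mem_union, Finset.mem_coe, Finset.mem_product, mem_cell] at h
    refine ⟨u, v, rfl, ?_, ?_⟩
    · rcases h with h | h <;> rw [h.1.1, h.2.1] <;> decide
    · rcases h with h | h <;> rw [h.1.2, h.2.2]
  · rintro ⟨u, v⟩ h ⟨u', v'⟩ h' he
    simp only [Finset.coe_union, Set.mem_union, Finset.mem_coe, Finset.mem_product, mem_cell]
      at h h'
    have hu : ψ u = 0 := by tauto
    have hv' : ψ v' = 1 := by tauto
    rcases Sym2.eq_iff.1 he with ⟨h1, h2⟩ | ⟨h1, -⟩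
    · exact Prod.ext h1 h2
    · -- the swapped identification would put a vertex in both classes of `ψ`
      change u = v' at h1
      rw [h1, hv'] at hu
      exact absurd hu (by decide)


/-- Let `V` be a finite set and `ψ, χ : V → Fin 2` two maps such that
both colour classes of `ψ` are nonempty.  Let `k` be the number of unordered pairs
`{u, v}` with `ψ u ≠ ψ v` (so in particular `u ≠ v`) and `χ u = χ v`.  Then `χ` can be
turned into `ψ` or into the colour-swapped version of `ψ` by changing its value on at
most `k` elements: for some `c : Fin 2`, the set `{v | χ v ≠ ψ v + c}` has at most `k`
elements. -/
theorem stmt11 {V : Type*} [Fintype V] (ψ χ : V → Fin 2)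
    (h0 : ∃ v, ψ v = 0) (h1 : ∃ v, ψ v = 1) :
    ∃ c : Fin 2, {v | χ v ≠ ψ v + c}.ncard ≤
      {p : Sym2 V | ∃ u v, p = s(u, v) ∧ ψ u ≠ ψ v ∧ χ u = χ v}.ncard := by
  have hk := cells_le_pairs ψ χ
  rcases cell_arith _ _ _ _ (cells_pos ψ χ 0 h0) (cells_pos ψ χ 1 h1) with h | h
  · exact ⟨0, (flips_le ψ χ 0).trans (h.trans hk)⟩
  · exact ⟨1, (flips_le ψ χ 1).trans (h.trans hk)⟩
end

section
/- Let a_0, a_1, b_0, b_1 be natural numbers with a_0 + a_1 ≥ 1 and b_0 + b_1 ≥ 1. Then min(a_0 + b_1, a_1 + b_0) ≤ a_0·b_0 + a_1·b_1. -/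
/-!
If all four counts are positive, then `0 ≤ (x - 1) * (y - 1)` bounds each product below by
`x + y - 1`, so the number of monochromatic pairs is at least the total count minus 2; the two
sides of the minimum add up to the total and each is at least 2. If one count is zero, only one
product survives, and nonemptiness of the classes makes it dominate one side of the minimum.
-/

/-- This is `0 ≤ (x - 1) * (y - 1)` for positive natural numbers. -/
theorem add_le_mul_add_one {x y : ℕ} (hx : 1 ≤ x) (hy : 1 ≤ y) : x + y ≤ x * y + 1 := by
  obtain ⟨x, rfl⟩ := Nat.exists_eq_add_of_le hx
  obtain ⟨y, rfl⟩ := Nat.exists_eq_add_of_le hy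
  nlinarith [Nat.zero_le (x * y)]

/-- The counting inequality underlying the recolouring bound for a
connected bipartite component: if the two bipartition classes are nonempty
(`1 ≤ a0 + a1` and `1 ≤ b0 + b1`), then the minimum number of vertices that must be
flipped, `min (a0 + b1) (a1 + b0)`, is at most the number of monochromatic cross
pairs `a0 * b0 + a1 * b1`. -/
theorem stmt12 (a0 a1 b0 b1 : ℕ) (ha : 1 ≤ a0 + a1) (hb : 1 ≤ b0 + b1) :
    min (a0 + b1) (a1 + b0) ≤ a0 * b0 + a1 * b1 := by
  -- If one count vanishes, the opposite count in its class is positive, and one side of the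
  -- minimum is bounded by the single surviving product.
  rcases Nat.eq_zero_or_pos a0 with rfl | h0
  · have h : b1 ≤ a1 * b1 := Nat.le_mul_of_pos_left _ (by omega)
    omega
  rcases Nat.eq_zero_or_pos a1 with rfl | h1
  · have h : b0 ≤ a0 * b0 := Nat.le_mul_of_pos_left _ h0
    omega
  rcases Nat.eq_zero_or_pos b0 with rfl | h2
  · have h : a1 ≤ a1 * b1 := Nat.le_mul_of_pos_right _ (by omega)
    omega
  rcases Nat.eq_zero_or_pos b1 with rfl | h3
  · have h : a0 ≤ a0 * b0 := Nat.le_mul_of_pos_right _ h2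
    omega
  -- Both sides of the minimum are at least 2 and they add up to the total, so each is at most
  -- the total minus 2.
  have h4 := add_le_mul_add_one h0 h2
  have h5 := add_le_mul_add_one h1 h3
  omega
end
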